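/- Let d ≥ 2 and λ ∈ [0,1). With W(x) = F(x) − F(T x) for x ∈ Δ, one has W(x) → ∞ as x → 0 within Δ: for every M > 0 there exists δ > 0 such that W(x) ≥ M for every x ∈ Δ with ‖x‖ ≤ δ. -/

import Mathlib

noncomputable section

open Metric Set Filter

/-- Euclidean space `ℝ^d` with `d = d' + 2 ≥ 2`. -/
abbrev Euc (d : ℕ) := EuclideanSpace ℝ (Fin (d + 2))

/-- The standard basis vectors. -/
def e (d : ℕ) (j : Fin (d + 2)) : Euc d := EuclideanSpace.single j 1

/-- The Douglas–Rachford operator for the unit sphere and the line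
`L_λ = {t e₁ + λ e₂}`, given by its explicit formula
`T x = (x₁/‖x‖) e₁ + ((1 − 1/‖x‖) x₂ + λ) e₂ + (1 − 1/‖x‖) ∑_{j=3}^d x_j e_j`. -/
def DR (d : ℕ) (lam : ℝ) (x : Euc d) : Euc d :=
  (x 0 / ‖x‖) • e d 0 + ((1 - 1 / ‖x‖) * x 1 + lam) • e d 1 +
    ∑ j ∈ Finset.univ.filter (fun j : Fin (d + 2) => 2 ≤ (j : ℕ)),
      ((1 - 1 / ‖x‖) * x j) • e d j

/-- The Lyapunov-type function of Benoist:
`F(x) = ½‖x − λe₂‖² − λ log(1 + √(1 − x₁²)) + λ√(1 − x₁²) + (λ−1) log x₁`. -/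
def F (d : ℕ) (lam : ℝ) (x : Euc d) : ℝ :=
  (1 / 2) * ‖x - lam • e d 1‖ ^ 2 - lam * Real.log (1 + Real.sqrt (1 - (x 0) ^ 2)) +
    lam * Real.sqrt (1 - (x 0) ^ 2) + (lam - 1) * Real.log (x 0)

/-- `Δ = {x : 0 < x₁ ≤ 1}`. -/
def Delta (d : ℕ) : Set (Euc d) := {x | 0 < x 0 ∧ x 0 ≤ 1}

/-- `W(x) = F(x) − F(T x)`. -/
def W (d : ℕ) (lam : ℝ) (x : Euc d) : ℝ := F d lam x - F d lam (DR d lam x)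

/-!
Write `r = ‖x‖`. Since `(T x)₁ = x₁ / r`, the term `(λ - 1) log x₁` of `F` contributes exactly
`-(1 - λ) log r` to `W(x)`, which tends to `+∞` as `r → 0` because `λ < 1`. Everything else in
`W(x)` is bounded below: `‖x - λ e₂‖²` is nonnegative,
`‖T x - λ e₂‖² = (1 - r)² + x₁² (2 / r - 1)` is at most `1` for `r ≤ 2` because `x₁² ≤ r²`, and
`s - log (1 + s)` takes values in `[0, 1]` for `s = √(1 - x₁²)`.
-/

open scoped Topology

section DouglasRachford

variable {d : ℕ} (lam : ℝ) (x : Euc d)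

theorem norm_e (j : Fin (d + 2)) : ‖e d j‖ = 1 := by
  simp [e]

theorem inner_e_right (j : Fin (d + 2)) : inner ℝ x (e d j) = x j := by
  simp [e, EuclideanSpace.inner_single_right]

theorem DR_apply_zero : DR d lam x 0 = x 0 / ‖x‖ := by
  simp [DR, e, Pi.single_apply]

theorem DR_apply_one : DR d lam x 1 = (1 - 1 / ‖x‖) * x 1 + lam := by
  simp [DR, e, Pi.single_apply]

theorem ne_zero_and_ne_one_of_two_le {j : Fin (d + 2)} (hj : 2 ≤ (j : ℕ)) : j ≠ 0 ∧ j ≠ 1 := by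
  constructor <;> rintro rfl <;> simp at hj

theorem DR_apply_of_two_le {j : Fin (d + 2)} (hj : 2 ≤ (j : ℕ)) :
    DR d lam x j = (1 - 1 / ‖x‖) * x j := by
  obtain ⟨hj_zero, hj_one⟩ := ne_zero_and_ne_one_of_two_le hj
  simp [DR, e, Pi.single_apply, hj, hj_zero, hj_one]

theorem DR_sub_smul_e_one :
    DR d lam x - lam • e d 1 = (1 - 1 / ‖x‖) • x + (x 0 * (2 / ‖x‖ - 1)) • e d 0 := by
  ext j
  obtain rfl | rfl | hj : j = 0 ∨ j = 1 ∨ 2 ≤ (j : ℕ) := by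
    simp only [Fin.ext_iff, Fin.val_zero, Fin.val_one]
    omega
  · simp only [e, PiLp.sub_apply, DR_apply_zero, PiLp.smul_apply, ne_eq, zero_ne_one,
      not_false_eq_true, PiLp.single_eq_of_ne, smul_eq_mul, mul_zero, sub_zero, PiLp.add_apply,
      PiLp.single_eq_same, mul_one]
    ring
  · simp [DR_apply_one, e]
  · obtain ⟨hj_zero, hj_one⟩ := ne_zero_and_ne_one_of_two_le hj
    simp [DR_apply_of_two_le lam x hj, e, hj_zero, hj_one]

variable {x}

theorem norm_DR_sub_smul_e_one_sq (hx : x ≠ 0) :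
    ‖DR d lam x - lam • e d 1‖ ^ 2 = (1 - ‖x‖) ^ 2 + x 0 ^ 2 * (2 / ‖x‖ - 1) := by
  have hr : ‖x‖ ≠ 0 := norm_ne_zero_iff.mpr hx
  rw [DR_sub_smul_e_one, norm_add_sq_real, inner_smul_left, inner_smul_right, inner_e_right,
    norm_smul, norm_smul, norm_e, mul_one, mul_pow, Real.norm_eq_abs, Real.norm_eq_abs, sq_abs,
    sq_abs, RCLike.conj_to_real]
  field_simp
  ring

theorem norm_DR_sub_smul_e_one_sq_le_one (hx : ‖x‖ ≤ 2) :
    ‖DR d lam x - lam • e d 1‖ ^ 2 ≤ 1 := by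
  obtain rfl | hne := eq_or_ne x 0
  · simp [DR_sub_smul_e_one]
  have hr : 0 < ‖x‖ := norm_pos_iff.mpr hne
  have coord_sq_le : x 0 ^ 2 ≤ ‖x‖ ^ 2 := sq_le_sq.mpr (by simpa using PiLp.norm_apply_le x 0)
  have factor_nonneg : 0 ≤ 2 / ‖x‖ - 1 := sub_nonneg.mpr ((one_le_div hr).mpr hx)
  calc ‖DR d lam x - lam • e d 1‖ ^ 2
      = (1 - ‖x‖) ^ 2 + x 0 ^ 2 * (2 / ‖x‖ - 1) := norm_DR_sub_smul_e_one_sq lam hne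
    _ ≤ (1 - ‖x‖) ^ 2 + ‖x‖ ^ 2 * (2 / ‖x‖ - 1) := by gcongr
    _ = 1 := by field_simp; ring

end DouglasRachford

/-- The profile `t ↦ s - log (1 + s)` with `s = √(1 - t²)`: the function of `t = x₁` that `F`
carries with coefficient `λ`. Outside `[-1, 1]` the square root, hence the profile, is `0`. -/
def profile (t : ℝ) : ℝ := √(1 - t ^ 2) - Real.log (1 + √(1 - t ^ 2))

theorem profile_mem_Icc (t : ℝ) : profile t ∈ Icc (0 : ℝ) 1 := by
  have sqrt_nonneg : 0 ≤ √(1 - t ^ 2) := Real.sqrt_nonneg _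
  have sqrt_le_one : √(1 - t ^ 2) ≤ 1 := Real.sqrt_le_one.mpr (by linarith [sq_nonneg t])
  have log_nonneg : 0 ≤ Real.log (1 + √(1 - t ^ 2)) := Real.log_nonneg (by linarith)
  have log_le : Real.log (1 + √(1 - t ^ 2)) ≤ 1 + √(1 - t ^ 2) - 1 :=
    Real.log_le_sub_one_of_pos (by linarith)
  constructor <;> unfold profile <;> linarith

theorem abs_profile_sub_profile_le_one (s t : ℝ) : |profile s - profile t| ≤ 1 := by
  simpa using abs_sub_le_of_le_of_le (profile_mem_Icc s).1 (profile_mem_Icc s).2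
    (profile_mem_Icc t).1 (profile_mem_Icc t).2

section Lyapunov

variable {d : ℕ} (lam : ℝ) {x : Euc d}

theorem F_eq_profile (x : Euc d) :
    F d lam x = ‖x - lam • e d 1‖ ^ 2 / 2 + lam * profile (x 0) - (1 - lam) * Real.log (x 0) := by
  unfold F profile
  ring

theorem W_eq_profile (hx : 0 < x 0) :
    W d lam x = (‖x - lam • e d 1‖ ^ 2 - ‖DR d lam x - lam • e d 1‖ ^ 2) / 2 +
      lam * (profile (x 0) - profile (x 0 / ‖x‖)) - (1 - lam) * Real.log ‖x‖ := by
  have hr : ‖x‖ ≠ 0 := norm_ne_zero_iff.mpr (by rintro rfl; simp at hx)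
  rw [W, F_eq_profile, F_eq_profile, DR_apply_zero, Real.log_div hx.ne' hr]
  ring

theorem neg_log_norm_sub_le_W (hx : 0 < x 0) (hx_norm : ‖x‖ ≤ 2) :
    -(1 - lam) * Real.log ‖x‖ - (|lam| + 1 / 2) ≤ W d lam x := by
  have profile_term : |lam * (profile (x 0) - profile (x 0 / ‖x‖))| ≤ |lam| := by
    rw [abs_mul]
    exact mul_le_of_le_one_right (abs_nonneg _) (abs_profile_sub_profile_le_one _ _)
  rw [W_eq_profile lam hx]
  linarith [neg_le_of_abs_le profile_term, norm_DR_sub_smul_e_one_sq_le_one lam hx_norm,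
    sq_nonneg ‖x - lam • e d 1‖]

end Lyapunov

theorem stmt8_general (d : ℕ) {lam : ℝ} (h1 : lam < 1) :
    Tendsto (W d lam) (𝓝[Delta d] 0) atTop := by
  have norm_tendsto : Tendsto (fun x : Euc d ↦ ‖x‖) (𝓝[Delta d] 0) (𝓝[>] 0) := by
    refine tendsto_norm_nhdsNE_zero.mono_left (nhdsWithin_mono _ ?_)
    rintro x ⟨hx, -⟩ rfl
    simp at hx
  have lower_bound_tendsto : Tendsto (fun x : Euc d ↦ -(1 - lam) * Real.log ‖x‖ - (|lam| + 1 / 2))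
      (𝓝[Delta d] 0) atTop :=
    tendsto_atTop_add_const_right _ _
      ((Real.tendsto_log_nhdsGT_zero.comp norm_tendsto).const_mul_atBot_of_neg (by linarith))
  refine tendsto_atTop_mono' _ ?_ lower_bound_tendsto
  filter_upwards [self_mem_nhdsWithin,
    mem_nhdsWithin_of_mem_nhds (closedBall_mem_nhds (0 : Euc d) two_pos)] with x hx hx_ball
  exact neg_log_norm_sub_le_W lam hx.1 (mem_closedBall_zero_iff.mp hx_ball)

/-- For `λ ∈ [0,1)`, `W(x) → ∞` as `x → 0` within `Δ`: for every `M > 0`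
there is `δ > 0` such that `W(x) ≥ M` for every `x ∈ Δ` with `‖x‖ ≤ δ`. -/
theorem stmt8 (d : ℕ) (lam : ℝ) (h0 : 0 ≤ lam) (h1 : lam < 1) :
    ∀ M : ℝ, 0 < M → ∃ δ : ℝ, 0 < δ ∧
      ∀ x ∈ Delta d, ‖x‖ ≤ δ → M ≤ W d lam x := by
  intro M _
  obtain ⟨δ, hδ, hW⟩ := (nhdsWithin_hasBasis nhds_basis_closedBall (Delta d)).eventually_iff.mp
    ((stmt8_general d h1).eventually_ge_atTop M)
  exact ⟨δ, hδ, fun x hx hxδ ↦ hW ⟨mem_closedBall_zero_iff.mpr hxδ, hx⟩⟩
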